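/- arXiv:2006.00355 — 2 statements merged into one kernel-verified Lean document; each statement's English description precedes it below -/
import Mathlib

section
/- Let p be a prime, n ≥ 4 an integer, and t ≥ 1 a divisor of n such that n/t is even. Let G : F_{p^n} → F_{p^n} be given by G(x) = x^{p^n−2} + x^{p^t}. Then there exists c ∈ F_{p^n} with c ≠ 1 such that the c-differential uniformity of G satisfies δ_{G,c} ≥ p^t + 2. -/
open Finset

/-- The `(c,a,b)` entry of the `c`-Difference Distribution Table of `G`:
the number of `x` with `G (x + a) - c * G x = b`. -/
def cddt {F : Type*} [Field F] [Fintype F] [DecidableEq F]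
    (G : F → F) (c a b : F) : ℕ :=
  (Finset.univ.filter fun x : F => G (x + a) - c * G x = b).card

/-- The `c`-differential uniformity of `G`: the maximum entry of the `c`-DDT,
where `a ≠ 0` is required only when `c = 1`. -/
def cdu {F : Type*} [Field F] [Fintype F] [DecidableEq F]
    (G : F → F) (c : F) : ℕ :=
  ((Finset.univ : Finset (F × F)).filter fun p => c = 1 → p.1 ≠ 0).sup
    fun p => cddt G c p.1 p.2

/-!
A zero shift gives `G (x + 0) - c * G x = (1 - c) * G x`, so for every `c ≠ 1` the zeros of `G` are
exactly the solutions counted by the entry at `(0, 0)`. Writing `q = p ^ t`, the zeros of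
`x⁻¹ + x ^ q` are `0` and the solutions of `x ^ (q + 1) = -1`. As `n / t` is even, `q ^ 2 - 1`
divides the order of the cyclic group `Fˣ`, so `F` contains all `(q + 1)`-th roots of unity. One
solution is then `-1` if `q` is even, and a primitive `2 * (q + 1)`-th root of unity if `q` is odd;
hence there are `q + 1` solutions.
-/

section CDifference

variable {F : Type*} [Field F] [Fintype F] [DecidableEq F]

lemma cddt_le_cdu (G : F → F) {c a : F} (b : F) (ha : c = 1 → a ≠ 0) :
    cddt G c a b ≤ cdu G c :=
  le_sup (f := fun s : F × F => cddt G c s.1 s.2) (b := (a, b)) (by simpa using ha)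

lemma cddt_zero_shift (G : F → F) {c : F} (hc : c ≠ 1) (b : F) :
    cddt G c 0 b = #{x | G x = b / (1 - c)} := by
  have h_ne : 1 - c ≠ 0 := sub_ne_zero.2 hc.symm
  refine congrArg card (filter_congr fun x _ => ?_)
  rw [add_zero, ← one_sub_mul, mul_comm, eq_div_iff h_ne]

end CDifference

section Zeros

variable {F : Type*} [Field F]

lemma inv_add_pow_eq_zero_iff {q : ℕ} (hq : q ≠ 0) (x : F) :
    x⁻¹ + x ^ q = 0 ↔ x = 0 ∨ x ^ (q + 1) = -1 := by
  rcases eq_or_ne x 0 with rfl | hx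
  · simp [hq]
  · have h_mul : (x⁻¹ + x ^ q) * x = x ^ (q + 1) + 1 := by
      rw [add_mul, inv_mul_cancel₀ hx, pow_succ, add_comm]
    rw [or_iff_right hx, ← mul_eq_zero_iff_right hx, h_mul, add_eq_zero_iff_eq_neg]

lemma card_filter_inv_add_pow_eq_zero [Fintype F] [DecidableEq F] {q : ℕ} (hq : q ≠ 0) :
    #{x : F | x⁻¹ + x ^ q = 0} = #(Polynomial.nthRootsFinset (q + 1) (-1 : F)) + 1 := by
  have h_zeros : ({x : F | x⁻¹ + x ^ q = 0} : Finset F) =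
      insert 0 (Polynomial.nthRootsFinset (q + 1) (-1)) := by
    ext x
    rw [mem_filter_univ, inv_add_pow_eq_zero_iff hq, mem_insert,
      Polynomial.mem_nthRootsFinset q.succ_pos]
  have h_zero : (0 : F) ∉ Polynomial.nthRootsFinset (q + 1) (-1) := fun h =>
    Polynomial.ne_zero_of_mem_nthRootsFinset (neg_ne_zero.2 one_ne_zero) h rfl
  rw [h_zeros, card_insert_of_notMem h_zero]

end Zeros

section RootsOfUnity

lemma card_nthRootsFinset_of_pow_eq {R : Type*} [CommRing R] [IsDomain R] {m : ℕ} {ζ α a : R}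
    (hζ : IsPrimitiveRoot ζ m) (ha : a ≠ 0) (hα : α ^ m = a) :
    #(Polynomial.nthRootsFinset m a) = m := by
  classical
  rw [Polynomial.nthRootsFinset_def, Multiset.toFinset_card_of_nodup (hζ.nthRoots_nodup ha),
    hζ.card_nthRoots, if_pos ⟨α, hα⟩]

variable {F : Type*} [Field F] [Fintype F]

lemma exists_isPrimitiveRoot_of_dvd_card_sub_one {m : ℕ} (hm : m ∣ Fintype.card F - 1) :
    ∃ ζ : F, IsPrimitiveRoot ζ m := by
  classical
  obtain ⟨g, hg⟩ := IsCyclic.exists_ofOrder_eq_natCard (α := Fˣ)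
  have hg_order : orderOf g = Fintype.card F - 1 := by
    rw [hg, Nat.card_eq_fintype_card, Fintype.card_units]
  obtain ⟨k, hk⟩ := hm
  have h_root : IsPrimitiveRoot (g ^ k) m :=
    (IsPrimitiveRoot.orderOf g).pow (orderOf_pos g) (by rw [hg_order, hk, mul_comm])
  exact ⟨_, IsPrimitiveRoot.coe_units_iff.2 h_root⟩

lemma exists_pow_eq_neg_one {m : ℕ} (hm : Odd m ∨ 2 * m ∣ Fintype.card F - 1) :
    ∃ α : F, α ^ m = -1 := by
  rcases hm with h_odd | h_dvd
  · exact ⟨-1, h_odd.neg_one_pow⟩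
  · obtain ⟨ζ, hζ⟩ := exists_isPrimitiveRoot_of_dvd_card_sub_one h_dvd
    have h_pos : 0 < 2 * m :=
      Nat.pos_of_dvd_of_pos h_dvd (Nat.sub_pos_of_lt Fintype.one_lt_card)
    exact ⟨ζ, (hζ.pow h_pos (mul_comm 2 m)).eq_neg_one_of_two_right⟩

lemma card_nthRootsFinset_neg_one {m : ℕ} (hm : m ∣ Fintype.card F - 1)
    (hm_two : Odd m ∨ 2 * m ∣ Fintype.card F - 1) :
    #(Polynomial.nthRootsFinset m (-1 : F)) = m := by
  obtain ⟨ζ, hζ⟩ := exists_isPrimitiveRoot_of_dvd_card_sub_one hm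
  obtain ⟨α, hα⟩ := exists_pow_eq_neg_one hm_two
  exact card_nthRootsFinset_of_pow_eq hζ (neg_ne_zero.2 one_ne_zero) hα

lemma pow_card_sub_two_eq_inv (h_card : 2 < Fintype.card F) (x : F) :
    x ^ (Fintype.card F - 2) = x⁻¹ := by
  rcases eq_or_ne x 0 with rfl | hx
  · rw [zero_pow (Nat.sub_ne_zero_of_lt h_card), inv_zero]
  · refine eq_inv_of_mul_eq_one_left ?_
    rw [← pow_succ, show Fintype.card F - 2 + 1 = Fintype.card F - 1 by lia,
      FiniteField.pow_card_sub_one_eq_one x hx]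

end RootsOfUnity

section Arithmetic

lemma sq_sub_one_eq_mul (q : ℕ) : q ^ 2 - 1 = (q + 1) * (q - 1) := by
  simpa using Nat.sq_sub_sq q 1

lemma two_le_of_sq_sub_one_dvd {q m : ℕ} (hm : m ≠ 0) (hq : q ^ 2 - 1 ∣ m) : 2 ≤ q := by
  by_contra! h_lt
  refine hm (Nat.eq_zero_of_zero_dvd ?_)
  rwa [sq_sub_one_eq_mul, show q - 1 = 0 by lia, mul_zero] at hq

lemma odd_succ_or_two_mul_succ_dvd_sq_sub_one (q : ℕ) :
    Odd (q + 1) ∨ 2 * (q + 1) ∣ q ^ 2 - 1 := by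
  rcases Nat.even_or_odd q with h_even | h_odd
  · exact .inl h_even.add_one
  · rw [sq_sub_one_eq_mul, mul_comm 2]
    exact .inr (mul_dvd_mul_left _ (Nat.Odd.sub_odd h_odd odd_one).two_dvd)

lemma pow_sq_sub_one_dvd_pow_sub_one (p : ℕ) {n t : ℕ} (htn : t ∣ n) (h_even : Even (n / t)) :
    (p ^ t) ^ 2 - 1 ∣ p ^ n - 1 := by
  rw [← pow_mul]
  exact Nat.pow_sub_one_dvd_pow_sub_one p (Nat.mul_dvd_of_dvd_div htn h_even.two_dvd)

end Arithmetic

theorem exists_c_with_large_cdu_general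
    {F : Type*} [Field F] [Fintype F] [DecidableEq F]
    {q : ℕ} (hq : q ^ 2 - 1 ∣ Fintype.card F - 1)
    {G : F → F} (hG : ∀ x : F, G x = x ^ (Fintype.card F - 2) + x ^ q)
    {c : F} (hc : c ≠ 1) :
    q + 2 ≤ cdu G c := by
  have h_card_pos : 0 < Fintype.card F - 1 := Nat.sub_pos_of_lt Fintype.one_lt_card
  have hq_two : 2 ≤ q := two_le_of_sq_sub_one_dvd h_card_pos.ne' hq
  have h_card : 2 < Fintype.card F := by
    have := Nat.le_of_dvd h_card_pos hq
    have := Nat.pow_le_pow_left hq_two 2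
    lia
  have hG_inv : ∀ x, G x = x⁻¹ + x ^ q := fun x => by rw [hG, pow_card_sub_two_eq_inv h_card]
  have h_dvd : q + 1 ∣ Fintype.card F - 1 :=
    (Dvd.intro _ (sq_sub_one_eq_mul q).symm).trans hq
  have h_two : Odd (q + 1) ∨ 2 * (q + 1) ∣ Fintype.card F - 1 :=
    (odd_succ_or_two_mul_succ_dvd_sq_sub_one q).imp_right fun h => h.trans hq
  calc q + 2 = #(Polynomial.nthRootsFinset (q + 1) (-1 : F)) + 1 := by
        rw [card_nthRootsFinset_neg_one h_dvd h_two]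
    _ = #{x | G x = 0} := by
        simp only [hG_inv, card_filter_inv_add_pow_eq_zero (F := F) (q := q) (by lia)]
    _ = cddt G c 0 0 := by rw [cddt_zero_shift G hc, zero_div]
    _ ≤ cdu G c := cddt_le_cdu G 0 fun h => absurd h hc

theorem exists_c_with_large_cdu
    {F : Type*} [Field F] [Fintype F] [DecidableEq F]
    (p n t : ℕ) (hp : p.Prime) (hn : 4 ≤ n)
    (ht1 : 1 ≤ t) (htdvd : t ∣ n) (heven : Even (n / t))
    (hF : Fintype.card F = p ^ n)
    (G : F → F) (hG : ∀ x : F, G x = x ^ (p ^ n - 2) + x ^ p ^ t) :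
    ∃ c : F, c ≠ 1 ∧ p ^ t + 2 ≤ cdu G c :=
  ⟨0, zero_ne_one, exists_c_with_large_cdu_general
    (hF ▸ pow_sq_sub_one_dvd_pow_sub_one p htdvd heven) (hF ▸ hG) zero_ne_one⟩
end

section
/- Let n ≥ 2 be an even integer and let a, b ∈ F_{2^n} with b ≠ 0. Then the equation x^3 + a·x + b = 0 has exactly three solutions x ∈ F_{2^n} if and only if Tr(a^3/b^2) = 0 and the two roots t_1, t_2 ∈ F_{2^n} of t^2 + b·t + a^3 = 0 (which exist in F_{2^n} when Tr(a^3/b^2) = 0) are both cubes in F_{2^n}. -/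
open Finset

/-- The absolute trace of `F_{2^n}`, `Tr x = ∑_{i=0}^{n-1} x^{2^i}`,
viewed as an element of the field (its values lie in the prime subfield). -/
def Tr {F : Type*} [Field F] (n : ℕ) (x : F) : F :=
  ∑ i ∈ Finset.range n, x ^ 2 ^ i

/-! For `p = u * v` and `q = u ^ 3 + v ^ 3`, Cardano's formula writes the roots of
`x ^ 3 - 3 * p * x - q` as `u + v`, `ω * u + ω ^ 2 * v`, `ω ^ 2 * u + ω * v`, where `ω` is a
primitive cube root of unity. Conversely three distinct roots give such `u`, `v` by Lagrange
resolvents. Since `u ^ 3` and `v ^ 3` are the roots of `t ^ 2 - q * t + p ^ 3`, the cubic has three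
distinct roots iff this resolvent quadratic splits and its roots are cubes. In characteristic two
the cubic is `x ^ 3 + p * x + q`, a trace decides by additive Hilbert 90 whether the quadratic
splits, and `ω` lies in `F_{2^n}` because `3 ∣ 2 ^ n - 1` for even `n`. -/

section Cardano

variable {R : Type*} [CommRing R] {ω : R}

theorem sq_add_self_add_one_eq_zero_of_isPrimitiveRoot_three [IsDomain R]
    (hω : IsPrimitiveRoot ω 3) : ω ^ 2 + ω + 1 = 0 := by
  have hsum := hω.geom_sum_eq_zero (by norm_num)
  simp only [sum_range_succ, range_zero, sum_empty] at hsum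
  linear_combination hsum

theorem three_ne_zero_of_isPrimitiveRoot_three [IsDomain R] (hω : IsPrimitiveRoot ω 3) :
    (3 : R) ≠ 0 := by
  intro h3
  have hsq : (ω - 1) ^ 2 = 0 := by
    linear_combination sq_add_self_add_one_eq_zero_of_isPrimitiveRoot_three hω - ω * h3
  exact hω.ne_one (by norm_num) (sub_eq_zero.1 (pow_eq_zero_iff two_ne_zero |>.1 hsq))

theorem cardano_factorization (hω : ω ^ 2 + ω + 1 = 0) (u v x : R) :
    x ^ 3 - 3 * (u * v) * x - (u ^ 3 + v ^ 3) =
      (x - (u + v)) * ((x - (ω * u + ω ^ 2 * v)) * (x - (ω ^ 2 * u + ω * v))) := by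
  linear_combination (x - u - v) *
    ((u + v) * x - (ω - 1) * (u ^ 2 + v ^ 2) - (ω ^ 2 - ω + 1) * u * v) * hω

theorem setOf_cubic_eq_cardano_roots [IsDomain R] (hω : ω ^ 2 + ω + 1 = 0) (u v : R) :
    {x : R | x ^ 3 - 3 * (u * v) * x - (u ^ 3 + v ^ 3) = 0} =
      {u + v, ω * u + ω ^ 2 * v, ω ^ 2 * u + ω * v} := by
  ext x
  simp only [cardano_factorization hω, mul_eq_zero, sub_eq_zero, Set.mem_ofPred_eq,
    Set.mem_insert_iff, Set.mem_singleton_iff]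

theorem ncard_cardano_roots_eq_three [IsDomain R] (hω : IsPrimitiveRoot ω 3) {u v : R}
    (huv : u ^ 3 ≠ v ^ 3) :
    ({u + v, ω * u + ω ^ 2 * v, ω ^ 2 * u + ω * v} : Set R).ncard = 3 := by
  have hquad := sq_add_self_add_one_eq_zero_of_isPrimitiveRoot_three hω
  have hne : ∀ k, k ^ 3 = 1 → u - k * v ≠ 0 := fun k hk h ↦ huv <| by
    rw [sub_eq_zero.1 h, mul_pow, hk, one_mul]
  have hω1 : 1 - ω ≠ 0 := sub_ne_zero.2 (hω.ne_one (by norm_num)).symm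
  have hω0 : ω ≠ 0 := hω.ne_zero (by norm_num)
  refine Set.ncard_eq_three.2 ⟨_, _, _, ?_, ?_, ?_, rfl⟩ <;> rw [← sub_ne_zero]
  · have hfactor : u + v - (ω * u + ω ^ 2 * v) = (1 - ω) * (u - ω ^ 2 * v) := by
      linear_combination (1 - ω) * v * hquad
    rw [hfactor]
    exact mul_ne_zero hω1 (hne _ (by rw [← pow_mul, mul_comm, pow_mul, hω.pow_eq_one, one_pow]))
  · have hfactor : u + v - (ω ^ 2 * u + ω * v) = -ω ^ 2 * (1 - ω) * (u - ω * v) := by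
      linear_combination (1 - ω) * (u + (1 - ω) * v) * hquad
    rw [hfactor]
    exact mul_ne_zero (mul_ne_zero (neg_ne_zero.2 (pow_ne_zero 2 hω0)) hω1) (hne _ hω.pow_eq_one)
  · have hfactor : ω * u + ω ^ 2 * v - (ω ^ 2 * u + ω * v) = ω * (1 - ω) * (u - 1 * v) := by
      ring
    rw [hfactor]
    exact mul_ne_zero (mul_ne_zero hω0 hω1) (hne 1 (one_pow 3))

theorem vieta_of_three_distinct_roots [IsDomain R] {a b x y z : R}
    (hxy : x ≠ y) (hxz : x ≠ z) (hyz : y ≠ z)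
    (hx : x ^ 3 + a * x + b = 0) (hy : y ^ 3 + a * y + b = 0) (hz : z ^ 3 + a * z + b = 0) :
    x + y + z = 0 ∧ x * y + x * z + y * z = a := by
  have hquad_xy : x ^ 2 + x * y + y ^ 2 + a = 0 :=
    mul_left_cancel₀ (sub_ne_zero.2 hxy) (by linear_combination hx - hy)
  have hquad_xz : x ^ 2 + x * z + z ^ 2 + a = 0 :=
    mul_left_cancel₀ (sub_ne_zero.2 hxz) (by linear_combination hx - hz)
  have hsum : x + y + z = 0 :=
    mul_left_cancel₀ (sub_ne_zero.2 hyz) (by linear_combination hquad_xy - hquad_xz)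
  exact ⟨hsum, by linear_combination (x + y) * hsum - hquad_xy⟩

variable {K : Type*} [Field K]

theorem exists_add_eq_and_mul_eq_of_vieta {ω : K} (hω : IsPrimitiveRoot ω 3) {p x y z : K}
    (hsum : x + y + z = 0) (hpairs : x * y + x * z + y * z = -3 * p) :
    ∃ u v : K, u + v = x ∧ u * v = p := by
  have hquad := sq_add_self_add_one_eq_zero_of_isPrimitiveRoot_three hω
  have h3 := three_ne_zero_of_isPrimitiveRoot_three hω
  -- Lagrange resolvents of `x`, `y`, `z`, divided by `3`.
  refine ⟨(x + ω ^ 2 * y + ω * z) / 3, (x + ω * y + ω ^ 2 * z) / 3, ?_, ?_⟩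
  · field_simp
    linear_combination (y + z) * hquad - hsum
  · field_simp
    linear_combination
      ((ω - 1) * (y ^ 2 + z ^ 2) + (x * y + x * z) + (ω ^ 2 - ω + 1) * y * z) * hquad +
      (x + y + z) * hsum - 3 * hpairs

theorem ncard_depressed_cubic_eq_three_iff {ω : K} (hω : IsPrimitiveRoot ω 3) {p q : K}
    (hdiscr : q ^ 2 ≠ 4 * p ^ 3) :
    {x : K | x ^ 3 - 3 * p * x - q = 0}.ncard = 3 ↔ ∃ u v : K, u * v = p ∧ u ^ 3 + v ^ 3 = q := by
  constructor
  · intro hcard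
    obtain ⟨x, y, z, hxy, hxz, hyz, hroots⟩ := Set.ncard_eq_three.1 hcard
    have hroot : ∀ r ∈ ({x, y, z} : Set K), r ^ 3 + -3 * p * r + -q = 0 := fun r hr ↦ by
      have hr' : r ^ 3 - 3 * p * r - q = 0 := hroots.superset hr
      linear_combination hr'
    have hx := hroot x (by simp)
    obtain ⟨hsum, hpairs⟩ :=
      vieta_of_three_distinct_roots hxy hxz hyz hx (hroot y (by simp)) (hroot z (by simp))
    obtain ⟨u, v, huvx, huvp⟩ := exists_add_eq_and_mul_eq_of_vieta hω hsum hpairs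
    refine ⟨u, v, huvp, ?_⟩
    calc u ^ 3 + v ^ 3 = (u + v) ^ 3 - 3 * (u * v) * (u + v) := by ring
      _ = x ^ 3 - 3 * p * x := by rw [huvx, huvp]
      _ = q := by linear_combination hx
  · rintro ⟨u, v, rfl, rfl⟩
    rw [setOf_cubic_eq_cardano_roots (sq_add_self_add_one_eq_zero_of_isPrimitiveRoot_three hω)]
    refine ncard_cardano_roots_eq_three hω fun huv ↦ hdiscr ?_
    linear_combination (u ^ 3 - v ^ 3) * huv

theorem exists_mul_eq_and_pow_add_pow_eq_iff {n : ℕ} (hn : n ≠ 0) (p q : K) :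
    (∃ u v : K, u * v = p ∧ u ^ n + v ^ n = q) ↔
      (∃ t : K, t ^ 2 - q * t + p ^ n = 0) ∧
        ∀ t : K, t ^ 2 - q * t + p ^ n = 0 → ∃ z : K, z ^ n = t := by
  constructor
  · rintro ⟨u, v, rfl, rfl⟩
    have hfactor (t : K) : t ^ 2 - (u ^ n + v ^ n) * t + (u * v) ^ n =
        (t - u ^ n) * (t - v ^ n) := by ring
    simp only [hfactor, mul_eq_zero, sub_eq_zero]
    exact ⟨⟨u ^ n, .inl rfl⟩, fun t ht ↦ ht.elim (⟨u, ·.symm⟩) (⟨v, ·.symm⟩)⟩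
  · rintro ⟨⟨t, ht⟩, hpow⟩
    rcases eq_or_ne p 0 with rfl | hp
    · obtain ⟨z, hz⟩ := hpow q (by rw [zero_pow hn]; ring)
      exact ⟨z, 0, mul_zero z, by rw [hz, zero_pow hn, add_zero]⟩
    · obtain ⟨z, rfl⟩ := hpow t ht
      have hz : z ≠ 0 := by
        rintro rfl
        simp [hn, hp] at ht
      refine ⟨z, p / z, mul_div_cancel₀ p hz, ?_⟩
      rw [div_pow]
      field_simp
      linear_combination ht

end Cardano

section ArtinSchreier

variable {K L : Type*} [Field K] [Field L] [Algebra K L]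

theorem mem_bot_of_generator_fixes [IsGalois K L] {σ : Gal(L/K)}
    (hσ : ∀ τ, τ ∈ Subgroup.zpowers σ) {x : L} (hx : σ x = x) :
    x ∈ (⊥ : IntermediateField K L) := by
  refine (InfiniteGalois.mem_bot_iff_fixed x).2 fun τ ↦ ?_
  have hstab : Subgroup.zpowers σ ≤ MulAction.stabilizer Gal(L/K) x := by
    rwa [Subgroup.zpowers_le]
  exact hstab (hσ τ)

theorem range_generator_sub_id_eq_ker_trace [FiniteDimensional K L] [IsGalois K L] {σ : Gal(L/K)}
    (hσ : ∀ τ, τ ∈ Subgroup.zpowers σ) :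
    LinearMap.range (σ.toLinearMap - LinearMap.id) = LinearMap.ker (Algebra.trace K L) := by
  have hle : LinearMap.range (σ.toLinearMap - LinearMap.id) ≤
      LinearMap.ker (Algebra.trace K L) := by
    rintro _ ⟨y, rfl⟩
    simp [Algebra.trace_eq_of_algEquiv]
  have hker : LinearMap.ker (σ.toLinearMap - LinearMap.id) ≤
      Subalgebra.toSubmodule (⊥ : IntermediateField K L).toSubalgebra := fun x hx ↦
    mem_bot_of_generator_fixes hσ (sub_eq_zero.1 hx)
  have hker_finrank : Module.finrank K (LinearMap.ker (σ.toLinearMap - LinearMap.id)) ≤ 1 :=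
    (Submodule.finrank_mono hker).trans_eq IntermediateField.finrank_bot
  have hrank := (σ.toLinearMap - LinearMap.id).finrank_range_add_finrank_ker
  have htrace := Module.Dual.finrank_ker_add_one_of_ne_zero (Algebra.trace_ne_zero K L)
  exact Submodule.eq_of_le_of_finrank_le hle (by lia)

theorem trace_eq_zero_iff_exists_pow_card_sub_self [Finite L] (c : L) :
    Algebra.trace K L c = 0 ↔ ∃ y : L, y ^ Nat.card K - y = c := by
  have := Finite.of_injective _ (algebraMap K L).injective
  have := Fintype.ofFinite K
  have hσ (τ : Gal(L/K)) :
      τ ∈ Subgroup.zpowers (FiniteField.frobeniusAlgEquivOfAlgebraic K L) := by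
    obtain ⟨i, rfl⟩ := (FiniteField.bijective_frobeniusAlgEquivOfAlgebraic_pow K L).surjective τ
    exact Subgroup.npow_mem_zpowers _ _
  rw [← LinearMap.mem_ker, ← range_generator_sub_id_eq_ker_trace hσ, Nat.card_eq_fintype_card]
  rfl

end ArtinSchreier

section FiniteField

variable {F : Type*} [Field F]

theorem exists_isPrimitiveRoot_of_dvd_card_sub_one_s15 [Finite F] {k : ℕ} (hk : k ∣ Nat.card F - 1) :
    ∃ ζ : F, IsPrimitiveRoot ζ k := by
  rw [← Nat.card_units] at hk
  obtain ⟨g, hg⟩ := IsCyclic.exists_ofOrder_eq_natCard (α := Fˣ)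
  obtain ⟨m, hm⟩ := hk
  have hprim : IsPrimitiveRoot g (Nat.card Fˣ) := hg ▸ IsPrimitiveRoot.orderOf g
  exact ⟨_, IsPrimitiveRoot.coe_units_iff.2 (hprim.pow Nat.card_pos (hm.trans (mul_comm k m)))⟩

theorem three_dvd_two_pow_sub_one_of_even {n : ℕ} (hn : Even n) : 3 ∣ 2 ^ n - 1 := by
  obtain ⟨k, rfl⟩ := hn
  simpa [← two_mul, pow_mul] using Nat.sub_dvd_pow_sub_pow 4 1 k

variable [Finite F] [CharP F 2] {n : ℕ}

theorem Tr_eq_zero_iff_exists_sq_add_self (hF : Nat.card F = 2 ^ n) (c : F) :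
    Tr n c = 0 ↔ ∃ y : F, y ^ 2 + y = c := by
  let _ := ZMod.algebra F 2
  have hfinrank : Module.finrank (ZMod 2) F = n := by
    have hcard := Module.natCard_eq_pow_finrank (K := ZMod 2) (V := F)
    rw [hF, Nat.card_zmod] at hcard
    exact (Nat.pow_right_injective le_rfl hcard).symm
  have hTr : Tr n c = algebraMap (ZMod 2) F (Algebra.trace (ZMod 2) F c) := by
    rw [FiniteField.algebraMap_trace_eq_sum_pow, hfinrank, Nat.card_zmod, Tr]
  rw [hTr, map_eq_zero, trace_eq_zero_iff_exists_pow_card_sub_self]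
  simp only [Nat.card_zmod, CharTwo.sub_eq_add]

theorem exists_sq_add_mul_add_eq_zero_iff_Tr_eq_zero (hF : Nat.card F = 2 ^ n) {b : F} (hb : b ≠ 0)
    (c : F) : (∃ t : F, t ^ 2 + b * t + c = 0) ↔ Tr n (c / b ^ 2) = 0 := by
  rw [Tr_eq_zero_iff_exists_sq_add_self hF, (mul_left_surjective₀ hb).exists]
  refine exists_congr fun y ↦ ?_
  rw [eq_div_iff (pow_ne_zero 2 hb), CharTwo.add_eq_zero]
  ring_nf

end FiniteField

theorem cubic_three_solutions_iff
    {F : Type*} [Field F] [Fintype F] [DecidableEq F]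
    (n : ℕ) (hn : 2 ≤ n) (hneven : Even n)
    (hF : Fintype.card F = 2 ^ n)
    (a b : F) (hb : b ≠ 0) :
    (Finset.univ.filter fun x : F => x ^ 3 + a * x + b = 0).card = 3 ↔
      (Tr n (a ^ 3 / b ^ 2) = 0 ∧
        ∀ t : F, t ^ 2 + b * t + a ^ 3 = 0 → ∃ z : F, z ^ 3 = t) := by
  have : CharP F 2 := charP_of_card_eq_prime_pow hF
  have hcard : Nat.card F = 2 ^ n := Nat.card_eq_fintype_card.trans hF
  obtain ⟨ω, hω⟩ : ∃ ω : F, IsPrimitiveRoot ω 3 :=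
    exists_isPrimitiveRoot_of_dvd_card_sub_one_s15 (hcard ▸ three_dvd_two_pow_sub_one_of_even hneven)
  have h2 : (2 : F) = 0 := CharTwo.two_eq_zero
  have hdiscr : b ^ 2 ≠ 4 * a ^ 3 := fun h ↦
    pow_ne_zero 2 hb (by linear_combination h + 2 * a ^ 3 * h2)
  have hcubic (x : F) : x ^ 3 + a * x + b = x ^ 3 - 3 * a * x - b := by
    linear_combination (2 * a * x + b) * h2
  have hquad (t : F) : t ^ 2 + b * t + a ^ 3 = t ^ 2 - b * t + a ^ 3 := by
    linear_combination b * t * h2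
  rw [← exists_sq_add_mul_add_eq_zero_iff_Tr_eq_zero hcard hb]
  simp only [hcubic, hquad]
  rw [← exists_mul_eq_and_pow_add_pow_eq_iff three_ne_zero,
    ← ncard_depressed_cubic_eq_three_iff hω hdiscr, Set.ncard_eq_toFinset_card',
    Set.toFinset_ofPred]
end
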